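/- Let T̂_0 := 5·exp(2C_0³)/(η(α−ε)³(1−p_un)σ_0). On the event E, under Condition (H), for every iteration t ≤ T̂_0 the noise coefficients satisfy max_{i,j,r} ρ_{i,j,r}^{(t)} ≤ 100·exp(2C_0³)·log(16NmP/δ)·σ_0σ_n²d/(N(α−ε)³(1−p_un)). In particular, since T_0 ≤ T̂_0 where T_0 is the signal-learning hitting time, the same bound holds for all t ≤ T_0. -/

import Mathlib

open Finset MeasureTheory ProbabilityTheory
open scoped ENNReal NNReal

noncomputable section

namespace AD

/-- Cubic ReLU activation. -/
def phi (z : ℝ) : ℝ := (max 0 z) ^ 3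

/-- Negative sigmoid `ψ(z) = 1/(1+e^z)`. -/
def psi (z : ℝ) : ℝ := 1 / (1 + Real.exp z)

/-- Logistic loss `ℓ(z) = log(1+e^{-z})`. -/
def lloss (z : ℝ) : ℝ := Real.log (1 + Real.exp (-z))

/-- Logistic sigmoid `σ(z) = 1/(1+e^{-z})`. -/
def sigm (z : ℝ) : ℝ := 1 / (1 + Real.exp (-z))

/-- Euclidean inner product on `Fin d → ℝ`. -/
def dot {d : ℕ} (a b : Fin d → ℝ) : ℝ := ∑ k, a k * b k

/-- Squared Euclidean norm. -/
def sqnorm {d : ℕ} (a : Fin d → ℝ) : ℝ := dot a a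

/-- First standard basis vector `e₁` (the learnable feature `u`). -/
def e1 (d : ℕ) (hd : 0 < d) : Fin d → ℝ := fun k => if k = (⟨0, hd⟩ : Fin d) then 1 else 0

/-- Last standard basis vector `e_d` (the unlearnable feature `v`). -/
def eLast (d : ℕ) (_hd : 0 < d) : Fin d → ℝ := fun k => if (k : ℕ) = d - 1 then 1 else 0

/-- The two-layer student network
`f_W(X) = ∑_r ∑_p [φ(⟨w_r,x_p⟩) − φ(−⟨w_r,x_p⟩)]`. -/
def netOut {m P d : ℕ} (w : Fin m → Fin d → ℝ) (X : Fin P → Fin d → ℝ) : ℝ :=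
  ∑ r, ∑ p, (phi (dot (w r) (X p)) - phi (-(dot (w r) (X p))))

/-- The concentration event `E` of the paper, i.e. properties (P1)–(P8), stated for
training patches `x`, initialization `w0`, labels `y` and signal-patch indices `sig`. -/
def EventEOn (N m P d : ℕ) (hd : 0 < d) (sigman sigma0 delta : ℝ)
    (y : Fin N → ℝ) (sig : Fin N → Fin P)
    (x : Fin N → Fin P → Fin d → ℝ) (w0 : Fin m → Fin d → ℝ) : Prop :=
  -- (P1) noise-patch norms
  (∀ i j, j ≠ sig i →
      sigman ^ 2 * d / 2 ≤ sqnorm (x i j) ∧ sqnorm (x i j) ≤ 3 * sigman ^ 2 * d / 2) ∧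
  -- (P2) pairwise noise inner products
  (∀ i k j q, j ≠ sig i → q ≠ sig k → ((i, j) : Fin N × Fin P) ≠ (k, q) →
      |dot (x i j) (x k q)| ≤
        2 * sigman ^ 2 * Real.sqrt ((d : ℝ) * Real.log ((16 : ℝ) * N ^ 2 * P ^ 2 / delta))) ∧
  -- (P3) sup-norm of noise patches
  (∀ i j, j ≠ sig i → ∀ kk : Fin d,
      |x i j kk| ≤ sigman * Real.sqrt (2 * Real.log ((16 : ℝ) * d * N * P / delta))) ∧
  -- (P4) initialization norms
  (∀ r, Real.sqrt (sqnorm (w0 r)) ≤ 2 * sigma0 * Real.sqrt d) ∧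
  -- (P5) initialization signal correlation
  (∀ r, |dot (w0 r) (e1 d hd)| ≤ sigma0 * Real.sqrt (2 * Real.log ((16 : ℝ) * m / delta))) ∧
  -- (P6) initialization noise correlations
  (∀ r i j, j ≠ sig i →
      |dot (w0 r) (x i j)| ≤
        2 * sigma0 * sigman * Real.sqrt ((d : ℝ) * Real.log ((16 : ℝ) * N * m * P / delta))) ∧
  -- (P7) maximal initial signal alignment
  (∃ r, sigma0 / 2 ≤ dot (w0 r) (e1 d hd)) ∧
  -- (P8) maximal initial noise alignment
  (∀ i j, j ≠ sig i → ∃ r, sigma0 * sigman * Real.sqrt d / 4 ≤ y i * dot (w0 r) (x i j))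
structure Setting where
  N : ℕ
  m : ℕ
  P : ℕ
  d : ℕ
  T : ℕ
  hN : 0 < N
  hm : 0 < m
  hP : 0 < P
  hd : 0 < d
  alpha : ℝ
  sigman : ℝ
  sigma0 : ℝ
  eta : ℝ
  eps : ℝ
  delta : ℝ
  halpha : 0 < alpha
  hsigman : 0 < sigman
  hsigma0 : 0 < sigma0
  heta : 0 < eta
  heps : 0 < eps
  hepsalpha : eps < alpha
  hdelta0 : 0 < delta
  hdelta1 : delta < 1
  /-- labels -/
  y : Fin N → ℝ
  hy : ∀ i, y i = 1 ∨ y i = -1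
  /-- signal patch index -/
  sig : Fin N → Fin P
  /-- learnable samples -/
  SL : Finset (Fin N)
  /-- unlearnable samples -/
  SU : Finset (Fin N)
  hunion : SL ∪ SU = Finset.univ
  hdisj : Disjoint SL SU
  /-- training patches -/
  x : Fin N → Fin P → Fin d → ℝ
  hsigL : ∀ i ∈ SL, x i (sig i) = (alpha * y i) • e1 d hd
  hsigU : ∀ i ∈ SU, x i (sig i) = (alpha * y i) • eLast d hd
  hnoiseU : ∀ i j, j ≠ sig i → dot (x i j) (e1 d hd) = 0
  hnoiseV : ∀ i j, j ≠ sig i → dot (x i j) (eLast d hd) = 0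
  /-- weight trajectory -/
  w : ℕ → Fin m → Fin d → ℝ
  hwperp : ∀ t r, dot (w t r) (eLast d hd) = 0
  /-- adversarial training examples at each iteration -/
  xadv : ℕ → Fin N → Fin P → Fin d → ℝ
  hadvnoise : ∀ t i j, j ≠ sig i → xadv t i j = x i j
  hadvspan : ∀ t i, ∃ c : ℝ, xadv t i (sig i) - x i (sig i) = c • x i (sig i)
  hadvlinf : ∀ t i p k, |xadv t i p k - x i p k| ≤ eps
  hadvlearn : ∀ t : ℕ, ∀ i ∈ SL,
    alpha - eps ≤ y i * dot (xadv t i (sig i)) (e1 d hd) ∧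
      y i * dot (xadv t i (sig i)) (e1 d hd) ≤ alpha

namespace Setting

variable (S : Setting)

/-- Adversarial margin `y_i f_{W^{(t)}}(X̃_i^{(t)})`. -/
def marg (t : ℕ) (i : Fin S.N) : ℝ := S.y i * netOut (S.w t) (S.xadv t i)

/-- Signal coordinate `w_{r,1}^{(t)}`. -/
def wsig (t : ℕ) (r : Fin S.m) : ℝ := S.w t r ⟨0, S.hd⟩

/-- Unlearnable fraction `p_un = |S_U|/N`. -/
def pun : ℝ := (S.SU.card : ℝ) / S.N

/-- The adversarial-training gradient-descent dynamics. -/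
def ATDyn : Prop :=
  ∀ t r, S.w (t + 1) r = S.w t r +
    (3 * S.eta / S.N) •
      ∑ i : Fin S.N, (psi (S.marg t i) * S.y i) •
        ∑ p : Fin S.P, (dot (S.w t r) (S.xadv t i p)) ^ 2 • S.xadv t i p

/-- The signed gradient weight of sample `i` at iteration `t` under adversarial
distillation from teacher logits `fT`. -/
def gAD (fT : Fin S.N → ℝ) (t : ℕ) (i : Fin S.N) : ℝ :=
  sigm (S.y i * fT i) * psi (S.marg t i) - sigm (-(S.y i * fT i)) * psi (-(S.marg t i))

/-- The adversarial-distillation gradient-descent dynamics. -/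
def ADDyn (fT : Fin S.N → ℝ) : Prop :=
  ∀ t r, S.w (t + 1) r = S.w t r +
    (3 * S.eta / S.N) •
      ∑ i : Fin S.N, (S.gAD fT t i * S.y i) •
        ∑ p : Fin S.P, (dot (S.w t r) (S.xadv t i p)) ^ 2 • S.xadv t i p

/-- Noise coefficients `ρ_{i,j,r}^{(t)}` (adversarial training). -/
def rho (i : Fin S.N) (j : Fin S.P) (r : Fin S.m) : ℕ → ℝ
  | 0 => 0
  | t + 1 => rho i j r t + (3 * S.eta / S.N) * psi (S.marg t i) * (dot (S.w t r) (S.x i j)) ^ 2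

/-- Noise coefficients under adversarial distillation. -/
def rhoAD (fT : Fin S.N → ℝ) (i : Fin S.N) (j : Fin S.P) (r : Fin S.m) : ℕ → ℝ
  | 0 => 0
  | t + 1 => rhoAD fT i j r t + (3 * S.eta / S.N) * S.gAD fT t i * (dot (S.w t r) (S.x i j)) ^ 2

/-- The event `E` for a setting. -/
def EventE : Prop :=
  EventEOn S.N S.m S.P S.d S.hd S.sigman S.sigma0 S.delta S.y S.sig S.x (S.w 0)

/-- Condition (H): the parameter requirements of Condition 4.1 of the paper
(without the unlearnable-fraction regime item, which is imposed separately). -/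
def CondH (C : ℝ) : Prop :=
  1 ≤ C ∧
  -- training horizon
  C * S.N / (S.eta * S.sigma0 * S.sigman ^ 3 * ((S.d : ℝ) * Real.sqrt S.d)) ≤ (S.T : ℝ) ∧
  -- dimension
  C * S.m ^ 2 * S.P ^ 2 * S.N ^ 2 *
      (Real.log ((S.T : ℝ) * S.N * S.m * S.P / S.delta)) ^ 4 ≤ (S.d : ℝ) ∧
  -- signal strength
  C * S.sigman * Real.sqrt S.d * Real.log ((S.T : ℝ) * S.N * S.m * S.P / S.delta) /
      (((S.N : ℝ) * (1 - S.pun)) ^ ((1 : ℝ) / 3)) ≤ S.alpha ∧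
  -- initialization scale
  S.sigma0 ≤
    C⁻¹ *
        min (min (1 / ((S.m : ℝ) ^ ((2 : ℝ) / 3) * (S.P : ℝ) ^ ((2 : ℝ) / 3) *
            S.sigman * Real.sqrt S.d))
          (1 / (S.alpha * (S.m : ℝ) ^ ((2 : ℝ) / 3))))
          (1 / (S.sigman * S.m ^ 2 * Real.sqrt S.P * S.d)) /
      Real.log ((S.T : ℝ) * S.d * S.N * S.m * S.P / S.delta) ∧
  -- learning rate
  S.eta ≤
    C⁻¹ * min (min (1 / (S.alpha ^ 3 * S.sigma0)) (1 / (S.sigman ^ 2 * S.d))) (1 / S.alpha ^ 2) /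
      Real.log ((S.T : ℝ) * S.N * S.m * S.P / S.delta) ∧
  -- adversarial budget
  C * S.sigman * S.m * Real.sqrt S.P * Real.log ((S.T : ℝ) * S.d * S.N * S.P / S.delta) ≤ S.eps ∧
  S.eps < C⁻¹ * min S.alpha (1 / (S.m * S.sigma0 * S.d)) ∧
  -- width and number of patches
  C * Real.log ((S.N : ℝ) * S.P / S.delta) ≤ (S.m : ℝ) ∧
  (S.m : ℝ) ≤ C * Real.log S.d ^ C ∧
  2 ≤ S.P ∧ (S.P : ℝ) ≤ C

/-- The sparse-unlearnable regime of Condition 4.1. -/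
def SparseRegime (C : ℝ) : Prop :=
  C / S.N ≤ S.pun ∧ S.pun ≤ C⁻¹ * Real.log S.d / S.N ∧
  C * S.m * S.P * Real.log ((S.T : ℝ) * S.d * S.N * S.m * S.P / S.delta) ≤ (S.N : ℝ)

/-- The noise-stability bound (NS) on learnable samples at iteration `t`. -/
def NS (t : ℕ) : Prop :=
  ∀ r : Fin S.m, ∀ i ∈ S.SL, ∀ j, j ≠ S.sig i →
    |dot (S.w t r) (S.x i j)| ≤
      3 * S.sigma0 * S.sigman *
          Real.sqrt ((S.d : ℝ) * Real.log ((16 : ℝ) * S.N * S.m * S.P / S.delta)) +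
        21 * S.pun * S.N * S.P * Real.log S.T ^ ((1 : ℝ) / 3) / Real.sqrt S.d *
          Real.sqrt (Real.log ((16 : ℝ) * S.N ^ 2 * S.P ^ 2 / S.delta))

/-- The signal-learning hitting time `T₀`. -/
def T0 (C0 : ℝ) : ℕ :=
  sInf {t : ℕ | ∃ r, C0 / (S.alpha * (S.m : ℝ) ^ ((1 : ℝ) / 3)) < S.wsig t r}

/-- Maximum of the noise coefficients over unlearnable noise patches. -/
def rhoMaxSU (t : ℕ) : ℝ :=
  sSup {z : ℝ | ∃ r : Fin S.m, ∃ k ∈ S.SU, ∃ q, q ≠ S.sig k ∧ z = S.rho k q r t}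

/-- Shifted noise coefficients `ρ̂_{i,j,r}^{(t)}`. -/
def rhoHat (i : Fin S.N) (j : Fin S.P) (r : Fin S.m) (t : ℕ) : ℝ :=
  S.rho i j r t + S.y i * dot (S.w 0 r) (S.x i j) / sqnorm (S.x i j)

/-- Maximum shifted noise coefficient over unlearnable noise patches. -/
def rhoHatMax (t : ℕ) : ℝ :=
  sSup {z : ℝ | ∃ r : Fin S.m, ∃ k ∈ S.SU, ∃ q, q ≠ S.sig k ∧ z = S.rhoHat k q r t}

/-- The noise-memorization hitting time `T₁`. -/
def T1 (C1 : ℝ) : ℕ :=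
  sInf {t : ℕ | C1 / (((S.m : ℝ) * S.P) ^ ((1 : ℝ) / 3) * S.sigman ^ 2 * S.d) < S.rhoHatMax t}

/-- The Good-Teacher horizon `T_max`. -/
def Tmax : ℝ :=
  S.N / (1000 * S.eta * S.m * S.P * S.sigma0 ^ 4 * S.sigman ^ 6 * (S.d : ℝ) ^ 3 *
    Real.log ((16 : ℝ) * S.N * S.m * S.P / S.delta) ^ 2)

end Setting

theorem psi_pos (z : ℝ) : 0 < psi z := by
  unfold psi; positivity

theorem psi_le_one (z : ℝ) : psi z ≤ 1 := by
  unfold psi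
  rw [div_le_one (by positivity)]
  linarith [Real.exp_pos z]

theorem phi_sub_phi_neg (z : ℝ) : phi z - phi (-z) = z ^ 3 := by
  unfold phi
  rcases le_total 0 z with h | h
  · rw [max_eq_right h, max_eq_left (by linarith)]; ring
  · rw [max_eq_left h, max_eq_right (by linarith)]; ring

/-- If `z ≤ K` with `K ≥ 0`, the logistic weight is at least `exp (-K) / 2`. -/
theorem inv_two_exp_le_psi {z K : ℝ} (hK : 0 ≤ K) (hz : z ≤ K) :
    1 / (2 * Real.exp K) ≤ psi z := by
  unfold psi
  apply one_div_le_one_div_of_le (by positivity)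
  have h1 : Real.exp z ≤ Real.exp K := Real.exp_le_exp.mpr hz
  have h2 : 1 ≤ Real.exp K := Real.one_le_exp hK
  linarith

section dot

variable {d : ℕ}

theorem dot_comm (a b : Fin d → ℝ) : dot a b = dot b a := by
  simp only [dot, mul_comm]

theorem dot_add_left (a b c : Fin d → ℝ) : dot (a + b) c = dot a c + dot b c := by
  simp [dot, add_mul, Finset.sum_add_distrib]

theorem dot_smul_left (s : ℝ) (a b : Fin d → ℝ) : dot (s • a) b = s * dot a b := by
  simp [dot, Finset.mul_sum, mul_assoc]

theorem dot_smul_right (s : ℝ) (a b : Fin d → ℝ) : dot a (s • b) = s * dot a b := by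
  rw [dot_comm, dot_smul_left, dot_comm]

theorem dot_sum_left {ι : Type*} (s : Finset ι) (a : ι → Fin d → ℝ) (b : Fin d → ℝ) :
    dot (∑ i ∈ s, a i) b = ∑ i ∈ s, dot (a i) b := by
  simp only [dot, Finset.sum_apply, Finset.sum_mul]
  exact Finset.sum_comm

theorem dot_e1 (hd : 0 < d) (a : Fin d → ℝ) : dot a (e1 d hd) = a ⟨0, hd⟩ := by
  simp [dot, e1]

end dot

/-- A sequence with increments at least `κ w²` that stays below `A` while `κ A ≤ 1` satisfies
`n κ / 2 ≤ 1 / w 0`. -/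
theorem quadratic_growth_time {w : ℕ → ℝ} {κ A : ℝ} {n : ℕ} (hκ : 0 ≤ κ) (hκA : κ * A ≤ 1)
    (h0 : 0 < w 0) (hA : ∀ t < n, w t ≤ A) (hstep : ∀ t < n, w t + κ * w t ^ 2 ≤ w (t + 1)) :
    n * (κ / 2) ≤ 1 / w 0 := by
  have key : ∀ t ≤ n, 0 < w t ∧ 1 / w t + t * (κ / 2) ≤ 1 / w 0 := by
    intro t
    induction t with
    | zero => intro _; simpa using h0
    | succ t ih =>
      intro ht
      obtain ⟨hpos, hle⟩ := ih (by omega)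
      have hs := hstep t (by omega)
      have hkw : κ * w t ≤ 1 := (mul_le_mul_of_nonneg_left (hA t (by omega)) hκ).trans hκA
      have hpos' : 0 < w t + κ * w t ^ 2 := by positivity
      refine ⟨hpos'.trans_le hs, ?_⟩
      have h1 : 1 / w (t + 1) ≤ 1 / (w t + κ * w t ^ 2) := one_div_le_one_div_of_le hpos' hs
      have h2 : 1 / (w t + κ * w t ^ 2) ≤ 1 / w t - κ / 2 := by
        have hp1 : 0 < 1 + κ * w t := by positivity
        have e : 1 / w t - κ / 2 - 1 / (w t + κ * w t ^ 2)
            = κ * (1 - κ * w t) / (2 * (1 + κ * w t)) := by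
          have : w t + κ * w t ^ 2 = w t * (1 + κ * w t) := by ring
          rw [this]; field_simp; ring
        have : 0 ≤ κ * (1 - κ * w t) / (2 * (1 + κ * w t)) :=
          div_nonneg (mul_nonneg hκ (by linarith)) (by positivity)
        linarith
      push_cast
      linarith
  obtain ⟨hpos, hle⟩ := key n le_rfl
  have : 0 < 1 / w n := by positivity
  linarith

namespace Setting

variable (S : Setting)

theorem y_sq (i : Fin S.N) : S.y i ^ 2 = 1 := by
  rcases S.hy i with h | h <;> rw [h] <;> norm_num

theorem abs_y (i : Fin S.N) : |S.y i| = 1 := by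
  rcases S.hy i with h | h <;> rw [h] <;> norm_num

theorem mem_SL_or_mem_SU (i : Fin S.N) : i ∈ S.SL ∨ i ∈ S.SU := by
  have := Finset.mem_univ i
  rwa [← S.hunion, Finset.mem_union] at this

theorem N_pos : (0 : ℝ) < S.N := by exact_mod_cast S.hN

theorem card_SL_div : (S.SL.card : ℝ) / S.N = 1 - S.pun := by
  have h := Finset.card_union_of_disjoint S.hdisj
  rw [S.hunion, Finset.card_univ, Fintype.card_fin] at h
  have h' : (S.N : ℝ) = S.SL.card + S.SU.card := by exact_mod_cast h
  have := S.N_pos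
  unfold pun
  field_simp
  linarith

theorem xadv_sig_of_mem_SL (t : ℕ) {i : Fin S.N} (hi : i ∈ S.SL) :
    ∃ c : ℝ, S.xadv t i (S.sig i) = c • e1 S.d S.hd := by
  obtain ⟨c, hc⟩ := S.hadvspan t i
  refine ⟨(1 + c) * (S.alpha * S.y i), ?_⟩
  rw [sub_eq_iff_eq_add] at hc
  rw [hc, S.hsigL i hi, smul_smul, ← add_smul]
  congr 1; ring

theorem xadv_sig_of_mem_SU (t : ℕ) {i : Fin S.N} (hi : i ∈ S.SU) :
    ∃ c : ℝ, S.xadv t i (S.sig i) = c • eLast S.d S.hd := by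
  obtain ⟨c, hc⟩ := S.hadvspan t i
  refine ⟨(1 + c) * (S.alpha * S.y i), ?_⟩
  rw [sub_eq_iff_eq_add] at hc
  rw [hc, S.hsigU i hi, smul_smul, ← add_smul]
  congr 1; ring

theorem dot_xadv_sig_noise (t : ℕ) (k i : Fin S.N) {j : Fin S.P} (hj : j ≠ S.sig i) :
    dot (S.xadv t k (S.sig k)) (S.x i j) = 0 := by
  rcases S.mem_SL_or_mem_SU k with hk | hk
  · obtain ⟨c, hc⟩ := S.xadv_sig_of_mem_SL t hk
    rw [hc, dot_smul_left, dot_comm, S.hnoiseU i j hj, mul_zero]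
  · obtain ⟨c, hc⟩ := S.xadv_sig_of_mem_SU t hk
    rw [hc, dot_smul_left, dot_comm, S.hnoiseV i j hj, mul_zero]

theorem rho_nonneg (i : Fin S.N) (j : Fin S.P) (r : Fin S.m) (t : ℕ) : 0 ≤ S.rho i j r t := by
  induction t with
  | zero => exact le_rfl
  | succ t ih =>
    have := psi_pos (S.marg t i)
    have := S.heta
    simp only [rho]
    positivity

/-- Decomposition of the noise alignment of the weights along the noise coefficients. -/
theorem dot_w_noise {S : Setting} (hD : S.ATDyn) (i : Fin S.N) {j : Fin S.P} (hj : j ≠ S.sig i)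
    (r : Fin S.m) (t : ℕ) :
    dot (S.w t r) (S.x i j) = dot (S.w 0 r) (S.x i j) +
      ∑ k, ∑ q, if q = S.sig k then 0 else S.y k * S.rho k q r t * dot (S.x k q) (S.x i j) := by
  induction t with
  | zero => simp [rho]
  | succ t ih =>
    rw [hD t r, dot_add_left, dot_smul_left, dot_sum_left, ih, add_assoc, Finset.mul_sum,
      ← Finset.sum_add_distrib]
    congr 1
    refine Finset.sum_congr rfl fun k _ => ?_
    rw [dot_smul_left, dot_sum_left, Finset.mul_sum, Finset.mul_sum, ← Finset.sum_add_distrib]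
    refine Finset.sum_congr rfl fun q _ => ?_
    rw [dot_smul_left]
    split_ifs with hq
    · subst hq
      rw [S.dot_xadv_sig_noise t k i hj]; ring
    · rw [S.hadvnoise t k q hq]
      simp only [rho]; ring

/-- The signal alignments of the weights evolve through the learnable samples only. -/
theorem wsig_succ {S : Setting} (hD : S.ATDyn) (t : ℕ) (r : Fin S.m) :
    S.wsig (t + 1) r = S.wsig t r + (3 * S.eta / S.N) *
      ∑ i ∈ S.SL, psi (S.marg t i) *
        (S.y i * dot (S.xadv t i (S.sig i)) (e1 S.d S.hd)) ^ 3 * S.wsig t r ^ 2 := by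
  have hw : ∀ t, S.wsig t r = dot (S.w t r) (e1 S.d S.hd) := fun t => (dot_e1 S.hd _).symm
  rw [hw (t + 1), hD t r, dot_add_left, dot_smul_left, dot_sum_left, ← hw t]
  congr 2
  have hpatch : ∀ i, dot ((psi (S.marg t i) * S.y i) •
      ∑ p : Fin S.P, (dot (S.w t r) (S.xadv t i p)) ^ 2 • S.xadv t i p) (e1 S.d S.hd)
      = psi (S.marg t i) * S.y i * ((dot (S.w t r) (S.xadv t i (S.sig i))) ^ 2 *
        dot (S.xadv t i (S.sig i)) (e1 S.d S.hd)) := by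
    intro i
    rw [dot_smul_left, dot_sum_left, Finset.sum_eq_single (S.sig i), dot_smul_left]
    · intro p _ hp
      rw [dot_smul_left, S.hadvnoise t i p hp, S.hnoiseU i p hp, mul_zero]
    · simp
  rw [Finset.sum_congr rfl fun i _ => hpatch i]
  symm
  refine Finset.sum_subset_zero_on_sdiff (Finset.subset_univ _) ?_ ?_
  · intro i hi
    have hiU : i ∈ S.SU := (S.mem_SL_or_mem_SU i).resolve_left (by simpa using hi)
    obtain ⟨c, hc⟩ := S.xadv_sig_of_mem_SU t hiU
    rw [hc, dot_smul_right, S.hwperp]; ring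
  · intro i hi
    obtain ⟨c, hc⟩ := S.xadv_sig_of_mem_SL t hi
    have he : dot (e1 S.d S.hd) (e1 S.d S.hd) = 1 := by rw [dot_e1]; simp [e1]
    rw [hc, dot_smul_right, dot_smul_left, ← hw t, he]
    linear_combination (psi (S.marg t i) * c ^ 3 * S.wsig t r ^ 2 * S.y i) * S.y_sq i

/-- Upper bound on the margin of a learnable sample. -/
theorem marg_le {S : Setting} {t : ℕ} {i : Fin S.N} (hi : i ∈ S.SL) {a B : ℝ}
    (hB0 : 0 ≤ B) (ha0 : 0 ≤ a) (hsig : ∀ r, S.alpha * S.wsig t r ≤ a)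
    (hB : ∀ r j, j ≠ S.sig i → |dot (S.w t r) (S.x i j)| ≤ B) :
    S.marg t i ≤ S.m * a ^ 3 + S.m * S.P * B ^ 3 := by
  have hterm : ∀ r p, S.y i * (phi (dot (S.w t r) (S.xadv t i p)) -
      phi (-(dot (S.w t r) (S.xadv t i p)))) ≤ (if p = S.sig i then a ^ 3 else 0) + B ^ 3 := by
    intro r p
    rw [phi_sub_phi_neg]
    split_ifs with hp
    · subst hp
      obtain ⟨hl, hu⟩ := S.hadvlearn t i hi
      obtain ⟨c, hc⟩ := S.xadv_sig_of_mem_SL t hi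
      have he : dot (S.xadv t i (S.sig i)) (e1 S.d S.hd) = c := by
        rw [hc, dot_smul_left, dot_e1]; simp [e1]
      rw [he] at hl hu
      have hw : dot (S.w t r) (S.xadv t i (S.sig i)) = c * S.wsig t r := by
        rw [hc, dot_smul_right, dot_e1]; rfl
      have hle : S.y i * c * S.wsig t r ≤ a := by
        have hyc : 0 ≤ S.y i * c := by linarith [S.hepsalpha]
        rcases le_total 0 (S.wsig t r) with h | h
        · exact (mul_le_mul_of_nonneg_right hu h).trans (hsig r)
        · exact (mul_nonpos_of_nonneg_of_nonpos hyc h).trans ha0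
      have hcube : S.y i * (c * S.wsig t r) ^ 3 = (S.y i * c * S.wsig t r) ^ 3 := by
        linear_combination (-(S.y i) * (c * S.wsig t r) ^ 3) * S.y_sq i
      have : (S.y i * c * S.wsig t r) ^ 3 ≤ a ^ 3 := (Odd.pow_le_pow (by decide)).mpr hle
      rw [hw, hcube]
      have : 0 ≤ B ^ 3 := by positivity
      linarith
    · rw [S.hadvnoise t i p hp, zero_add]
      refine (le_abs_self _).trans ?_
      rw [abs_mul, S.abs_y, one_mul, abs_pow]
      exact pow_le_pow_left₀ (abs_nonneg _) (hB r p hp) 3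
  unfold marg netOut
  rw [Finset.mul_sum]
  calc _ ≤ ∑ _r : Fin S.m, ∑ p : Fin S.P, ((if p = S.sig i then a ^ 3 else 0) + B ^ 3) := by
        refine Finset.sum_le_sum fun r _ => ?_
        rw [Finset.mul_sum]
        exact Finset.sum_le_sum fun p _ => hterm r p
    _ = _ := by
        simp [Finset.sum_add_distrib]; ring

/-- Bound on the noise alignments in terms of a bound `R` on the noise coefficients. -/
theorem abs_dot_w_noise_le {S : Setting} (hD : S.ATDyn) (hE : S.EventE) {t : ℕ} {r : Fin S.m}
    {R : ℝ} (hR0 : 0 ≤ R) (hR : ∀ k q, q ≠ S.sig k → S.rho k q r t ≤ R)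
    {i : Fin S.N} {j : Fin S.P} (hj : j ≠ S.sig i) :
    |dot (S.w t r) (S.x i j)| ≤
      2 * S.sigma0 * S.sigman *
          Real.sqrt ((S.d : ℝ) * Real.log ((16 : ℝ) * S.N * S.m * S.P / S.delta)) +
        R * (3 * S.sigman ^ 2 * S.d / 2 + S.N * S.P * (2 * S.sigman ^ 2 *
          Real.sqrt ((S.d : ℝ) * Real.log ((16 : ℝ) * S.N ^ 2 * S.P ^ 2 / S.delta)))) := by
  obtain ⟨h1, h2, -, -, -, h6, -, -⟩ := hE
  set D := 3 * S.sigman ^ 2 * S.d / 2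
  set F := 2 * S.sigman ^ 2 *
    Real.sqrt ((S.d : ℝ) * Real.log ((16 : ℝ) * S.N ^ 2 * S.P ^ 2 / S.delta)) with hF
  have hF0 : 0 ≤ F := by positivity
  have hD0 : 0 ≤ D := by positivity
  have hterm : ∀ k q, |if q = S.sig k then 0 else S.y k * S.rho k q r t *
      dot (S.x k q) (S.x i j)| ≤ R * ((if k = i then if q = j then D else 0 else 0) + F) := by
    intro k q
    by_cases hq : q = S.sig k
    · rw [if_pos hq, abs_zero]
      refine mul_nonneg hR0 (add_nonneg ?_ hF0)
      split_ifs <;> first | exact hD0 | exact le_rfl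
    rw [if_neg hq, abs_mul, abs_mul, S.abs_y, one_mul, abs_of_nonneg (S.rho_nonneg k q r t)]
    refine mul_le_mul (hR k q hq) ?_ (abs_nonneg _) hR0
    split_ifs with hk hqj
    · subst hk hqj
      have hs := (h1 k q hq).2
      have h0 : 0 ≤ dot (S.x k q) (S.x k q) := Finset.sum_nonneg fun _ _ => mul_self_nonneg _
      rw [abs_of_nonneg h0]
      exact hs.trans (by linarith)
    · rw [zero_add]
      exact h2 k i q j hq hj fun h => hqj (Prod.ext_iff.mp h).2
    · rw [zero_add]
      exact h2 k i q j hq hj fun h => hk (Prod.ext_iff.mp h).1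
  rw [dot_w_noise hD i hj r t]
  refine (abs_add_le _ _).trans (add_le_add (h6 r i j hj) ?_)
  calc _ ≤ ∑ k, ∑ q, R * ((if k = i then if q = j then D else 0 else 0) + F) :=
        (Finset.abs_sum_le_sum_abs _ _).trans <| Finset.sum_le_sum fun k _ =>
          (Finset.abs_sum_le_sum_abs _ _).trans <| Finset.sum_le_sum fun q _ => hterm k q
    _ = R * (D + S.N * S.P * F) := by
        simp_rw [← Finset.mul_sum, Finset.sum_add_distrib]
        have : ∀ k : Fin S.N, (∑ q : Fin S.P, if k = i then if q = j then D else 0 else 0)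
            = if k = i then D else 0 := by
          intro k; split_ifs <;> simp
        simp [this, mul_assoc]

theorem CondH.one_le_T {S : Setting} {C : ℝ} (h : S.CondH C) : (1 : ℝ) ≤ S.T := by
  obtain ⟨hC, hT, -⟩ := h
  have := S.N_pos
  have := S.heta
  have := S.hsigma0
  have := S.hsigman
  have hd : (0 : ℝ) < S.d := by exact_mod_cast S.hd
  have hpos : (0 : ℝ) < S.T := lt_of_lt_of_le (by positivity) hT
  exact_mod_cast hpos

/-- The logarithmic factor `log (T N m P / δ)` of the parameter constraints. -/
def logT : ℝ := Real.log ((S.T : ℝ) * S.N * S.m * S.P / S.delta)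

/-- The logarithmic factor `log (16 N m P / δ)` of the noise bounds. -/
def logInit : ℝ := Real.log ((16 : ℝ) * S.N * S.m * S.P / S.delta)

section logs

variable {S} {C : ℝ}

theorem two_thirds_le_logT (h : S.CondH C) : 2 / 3 ≤ S.logT := by
  have hT := h.one_le_T
  have hN : (1 : ℝ) ≤ S.N := by exact_mod_cast S.hN
  have hm : (1 : ℝ) ≤ S.m := by exact_mod_cast S.hm
  have hP : (2 : ℝ) ≤ S.P := by exact_mod_cast h.2.2.2.2.2.2.2.2.2.2.1
  have : (2 : ℝ) ≤ (S.T : ℝ) * S.N * S.m * S.P / S.delta := by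
    rw [le_div_iff₀ S.hdelta0]
    have h1 : (1 : ℝ) ≤ (S.T : ℝ) * S.N * S.m := by
      nlinarith [one_le_mul_of_one_le_of_one_le hT hN]
    nlinarith [S.hdelta1]
  have := Real.log_le_log (by norm_num) this
  unfold logT
  linarith [Real.log_two_gt_d9]

theorem log_sixteen_le : Real.log 16 ≤ 3 := by
  have : (16 : ℝ) = 2 ^ 4 := by norm_num
  rw [this, Real.log_pow]
  push_cast
  linarith [Real.log_two_lt_d9]

theorem logInit_le (h : S.CondH C) : S.logInit ≤ 6 * S.logT := by
  have hT := h.one_le_T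
  have hN := S.N_pos
  have hm : (0 : ℝ) < S.m := by exact_mod_cast S.hm
  have hP : (0 : ℝ) < S.P := by exact_mod_cast S.hP
  have hδ := S.hdelta0
  have h1 : S.logInit ≤ Real.log (16 * ((S.T : ℝ) * S.N * S.m * S.P / S.delta)) := by
    refine Real.log_le_log (by positivity) ?_
    have : 0 ≤ (16 : ℝ) * S.N * S.m * S.P / S.delta := by positivity
    calc _ ≤ (S.T : ℝ) * ((16 : ℝ) * S.N * S.m * S.P / S.delta) := le_mul_of_one_le_left this hT
      _ = _ := by ring
  rw [Real.log_mul (by norm_num) (by positivity)] at h1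
  have := two_thirds_le_logT h
  have := log_sixteen_le
  unfold logT at *
  linarith

theorem one_le_logInit : 1 ≤ S.logInit := by
  have hN : (1 : ℝ) ≤ S.N := by exact_mod_cast S.hN
  have hm : (1 : ℝ) ≤ S.m := by exact_mod_cast S.hm
  have hP : (1 : ℝ) ≤ S.P := by exact_mod_cast S.hP
  have : (16 : ℝ) ≤ (16 : ℝ) * S.N * S.m * S.P / S.delta := by
    rw [le_div_iff₀ S.hdelta0]
    have h1 : (1 : ℝ) ≤ (S.N : ℝ) * S.m * S.P :=
      one_le_mul_of_one_le_of_one_le (one_le_mul_of_one_le_of_one_le hN hm) hP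
    nlinarith [S.hdelta1]
  rw [logInit, Real.le_log_iff_exp_le (by linarith)]
  linarith [Real.exp_one_lt_d9]

theorem log_pair_le (h : S.CondH C) :
    Real.log ((16 : ℝ) * S.N ^ 2 * S.P ^ 2 / S.delta) ≤ 7 * S.logT := by
  have hT := h.one_le_T
  have hN := S.N_pos
  have hm : (1 : ℝ) ≤ S.m := by exact_mod_cast S.hm
  have hP : (0 : ℝ) < S.P := by exact_mod_cast S.hP
  have hδ := S.hdelta0
  have hle : (16 : ℝ) * S.N ^ 2 * S.P ^ 2 / S.delta ≤
      16 * ((S.T : ℝ) * S.N * S.m * S.P / S.delta) ^ 2 := by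
    have h1 : 1 ≤ ((S.T : ℝ) * S.m) ^ 2 := one_le_pow₀ (one_le_mul_of_one_le_of_one_le hT hm)
    have h2 : 1 / S.delta ≤ 1 / S.delta ^ 2 :=
      one_div_le_one_div_of_le (by positivity) (by nlinarith [S.hdelta1])
    calc _ = (16 : ℝ) * S.N ^ 2 * S.P ^ 2 * (1 / S.delta) := by ring
      _ ≤ (16 : ℝ) * S.N ^ 2 * S.P ^ 2 * (1 / S.delta ^ 2) := by gcongr
      _ ≤ (16 : ℝ) * S.N ^ 2 * S.P ^ 2 * (1 / S.delta ^ 2) * ((S.T : ℝ) * S.m) ^ 2 :=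
        le_mul_of_one_le_right (by positivity) h1
      _ = _ := by field_simp
  have h1 := Real.log_le_log (by positivity) hle
  rw [Real.log_mul (by norm_num) (by positivity), Real.log_pow] at h1
  have := two_thirds_le_logT h
  have := log_sixteen_le
  unfold logT at *
  push_cast at h1
  linarith

theorem logT_le_log_mul_d (h : S.CondH C) :
    S.logT ≤ Real.log ((S.T : ℝ) * S.d * S.N * S.m * S.P / S.delta) := by
  have hT := h.one_le_T
  have hN := S.N_pos
  have hm : (0 : ℝ) < S.m := by exact_mod_cast S.hm
  have hP : (0 : ℝ) < S.P := by exact_mod_cast S.hP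
  have hd : (1 : ℝ) ≤ S.d := by exact_mod_cast S.hd
  have hδ := S.hdelta0
  refine Real.log_le_log (by positivity) ?_
  calc _ ≤ (S.d : ℝ) * ((S.T : ℝ) * S.N * S.m * S.P / S.delta) :=
        le_mul_of_one_le_left (by positivity) hd
    _ = _ := by ring

end logs

section consequences

variable {S} {C : ℝ}

theorem pun_le (h : S.CondH C) (hC : 2 ≤ C) (hs : S.SU.Nonempty → S.SparseRegime C) :
    S.pun ≤ 1 / 2 := by
  rcases S.SU.eq_empty_or_nonempty with he | hne
  · simp [pun, he]
  obtain ⟨-, h2, h3⟩ := hs hne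
  have hN := S.N_pos
  have hT := h.one_le_T
  have hN1 : (1 : ℝ) ≤ S.N := by exact_mod_cast S.hN
  have hm : (1 : ℝ) ≤ S.m := by exact_mod_cast S.hm
  have hP : (1 : ℝ) ≤ S.P := by exact_mod_cast S.hP
  have hd : (1 : ℝ) ≤ S.d := by exact_mod_cast S.hd
  have hlog : Real.log S.d ≤ Real.log ((S.T : ℝ) * S.d * S.N * S.m * S.P / S.delta) := by
    refine Real.log_le_log (by linarith) ?_
    rw [le_div_iff₀ S.hdelta0]
    have h1 : (1 : ℝ) ≤ S.T * S.N * S.m * S.P :=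
      one_le_mul_of_one_le_of_one_le (one_le_mul_of_one_le_of_one_le
        (one_le_mul_of_one_le_of_one_le hT hN1) hm) hP
    calc (S.d : ℝ) * S.delta ≤ S.d * 1 := by gcongr; exact S.hdelta1.le
      _ ≤ S.d * (S.T * S.N * S.m * S.P) := by gcongr
      _ = _ := by ring
  have hld : 0 ≤ Real.log S.d := Real.log_nonneg hd
  have hlogN : Real.log S.d ≤ S.N := by
    refine hlog.trans (le_trans ?_ h3)
    refine le_mul_of_one_le_left (hld.trans hlog) ?_
    exact one_le_mul_of_one_le_of_one_le (one_le_mul_of_one_le_of_one_le (by linarith) hm) hP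
  calc S.pun ≤ C⁻¹ * Real.log S.d / S.N := h2
    _ = C⁻¹ * (Real.log S.d / S.N) := by ring
    _ ≤ 2⁻¹ * 1 := by gcongr; rwa [div_le_one hN]
    _ = 1 / 2 := by norm_num

theorem cross_noise_le (h : S.CondH C) (hC : 1000 ≤ C) :
    S.N * S.P * (2 * S.sigman ^ 2 *
      Real.sqrt ((S.d : ℝ) * Real.log ((16 : ℝ) * S.N ^ 2 * S.P ^ 2 / S.delta))) ≤
      S.sigman ^ 2 * S.d / 2 := by
  have hm : (1 : ℝ) ≤ S.m := by exact_mod_cast S.hm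
  have hl := two_thirds_le_logT h
  have hp := log_pair_le h
  have hdim : C * S.m ^ 2 * S.P ^ 2 * S.N ^ 2 * S.logT ^ 4 ≤ (S.d : ℝ) := h.2.2.1
  have hcube : (8 / 27 : ℝ) ≤ S.logT ^ 3 := by
    have := pow_le_pow_left₀ (by norm_num) hl 3
    norm_num at this; exact this
  have hpow : 8 / 27 * S.logT ≤ S.logT ^ 4 := by
    calc 8 / 27 * S.logT ≤ S.logT ^ 3 * S.logT := by gcongr
      _ = _ := by ring
  have hdle : 16 * (S.N * S.P : ℝ) ^ 2 *
      Real.log ((16 : ℝ) * S.N ^ 2 * S.P ^ 2 / S.delta) ≤ S.d := by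
    refine le_trans ?_ hdim
    calc _ ≤ 16 * (S.N * S.P : ℝ) ^ 2 * (7 * S.logT) := by gcongr
      _ ≤ 1000 * (S.N * S.P : ℝ) ^ 2 * (8 / 27 * S.logT) := by
        have : 0 ≤ (S.N * S.P : ℝ) ^ 2 * S.logT := by positivity
        linarith
      _ ≤ C * (S.N * S.P : ℝ) ^ 2 * S.logT ^ 4 := by gcongr
      _ ≤ C * (S.N * S.P : ℝ) ^ 2 * S.logT ^ 4 * S.m ^ 2 :=
        le_mul_of_one_le_right (by positivity) (one_le_pow₀ hm)
      _ = _ := by ring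
  have hd : (0 : ℝ) ≤ S.d := Nat.cast_nonneg _
  have hsqrt : 4 * (S.N * S.P : ℝ) *
      Real.sqrt ((S.d : ℝ) * Real.log ((16 : ℝ) * S.N ^ 2 * S.P ^ 2 / S.delta)) ≤ S.d := by
    have e : 4 * (S.N * S.P : ℝ) = Real.sqrt ((4 * (S.N * S.P : ℝ)) ^ 2) :=
      (Real.sqrt_sq (by positivity)).symm
    rw [e, ← Real.sqrt_mul (by positivity)]
    refine Real.sqrt_le_iff.mpr ⟨hd, ?_⟩
    nlinarith [mul_le_mul_of_nonneg_left hdle hd]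
  have := mul_le_mul_of_nonneg_left hsqrt (sq_nonneg S.sigman)
  linarith

theorem half_alpha_le (h : S.CondH C) (hC : 2 ≤ C) : S.alpha / 2 ≤ S.alpha - S.eps := by
  have h1 : S.eps < C⁻¹ * min S.alpha (1 / (S.m * S.sigma0 * S.d)) := h.2.2.2.2.2.2.2.1
  have h2 : C⁻¹ * min S.alpha (1 / (S.m * S.sigma0 * S.d)) ≤ 2⁻¹ * S.alpha := by
    have := S.halpha
    calc _ ≤ C⁻¹ * S.alpha := by gcongr; exact min_le_left _ _
      _ ≤ _ := by gcongr
  linarith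

theorem signal_dominates (h : S.CondH C) {K : ℝ} (hK : 1 ≤ K) (hC : 64000 * K ≤ C)
    (hp : S.pun ≤ 1 / 2) :
    400 * K * Real.sqrt S.logInit * (S.sigman * Real.sqrt S.d) ^ 3 ≤
      S.N * (S.alpha - S.eps) ^ 3 * (1 - S.pun) := by
  have hC0 : 0 < C := by linarith
  have hN := S.N_pos
  have hl := two_thirds_le_logT h
  have hL := logInit_le h
  have hL1 := one_le_logInit (S := S)
  have hα := half_alpha_le h (by linarith)
  have hα0 := S.halpha
  have hσ := S.hsigman
  set M := (S.N : ℝ) * (1 - S.pun) with hM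
  have hM0 : 0 < M := mul_pos hN (by linarith)
  have hsig : C * S.sigman * Real.sqrt S.d * S.logT / M ^ ((1 : ℝ) / 3) ≤ S.alpha := h.2.2.2.1
  rw [div_le_iff₀ (by positivity)] at hsig
  have hcube : (C * S.sigman * Real.sqrt S.d * S.logT) ^ 3 ≤ S.alpha ^ 3 * M := by
    have h1 := pow_le_pow_left₀ (by positivity) hsig 3
    have h2 : (M ^ ((1 : ℝ) / 3)) ^ 3 = M := by
      rw [← Real.rpow_natCast, ← Real.rpow_mul hM0.le]; norm_num
    rwa [mul_pow S.alpha, h2] at h1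
  have hsq : Real.sqrt S.logInit ≤ 6 * S.logT :=
    (Real.sqrt_le_iff.mpr ⟨by linarith, by nlinarith⟩ : _ ≤ S.logInit).trans hL
  have hpow : 4 / 9 * S.logT ≤ S.logT ^ 3 := by
    have := pow_le_pow_left₀ (by norm_num) hl 2
    calc 4 / 9 * S.logT ≤ S.logT ^ 2 * S.logT := by gcongr; linarith
      _ = _ := by ring
  have hC3 : C ≤ C ^ 3 := le_self_pow₀ (by linarith) (by norm_num)
  calc _ ≤ 400 * K * (6 * S.logT) * (S.sigman * Real.sqrt S.d) ^ 3 := by gcongr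
    _ ≤ 1 / 8 * (64000 * K) * (4 / 9 * S.logT) * (S.sigman * Real.sqrt S.d) ^ 3 := by
      have : 0 ≤ K * S.logT * (S.sigman * Real.sqrt S.d) ^ 3 := by positivity
      linarith
    _ ≤ 1 / 8 * C ^ 3 * S.logT ^ 3 * (S.sigman * Real.sqrt S.d) ^ 3 := by
      gcongr
      exact hC.trans hC3
    _ = 1 / 8 * (C * S.sigman * Real.sqrt S.d * S.logT) ^ 3 := by ring
    _ ≤ 1 / 8 * (S.alpha ^ 3 * M) := by gcongr
    _ = (S.alpha / 2) ^ 3 * M := by ring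
    _ ≤ (S.alpha - S.eps) ^ 3 * M := by gcongr
    _ = _ := by rw [hM]; ring

theorem noise_output_le (h : S.CondH C) (hC : 15 ≤ C) :
    S.m * S.P * (5 / 2 * (S.sigma0 * S.sigman * Real.sqrt S.d * Real.sqrt S.logInit)) ^ 3 ≤ 1 := by
  have hm : (1 : ℝ) ≤ S.m := by exact_mod_cast S.hm
  have hP : (1 : ℝ) ≤ S.P := by exact_mod_cast S.hP
  have hl := two_thirds_le_logT h
  have hL := logInit_le h
  have hL1 := one_le_logInit (S := S)
  have hld := logT_le_log_mul_d h
  have hd : (0 : ℝ) < S.d := by exact_mod_cast S.hd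
  have hσ := S.hsigman
  have hσ0 := S.hsigma0
  have hinit := h.2.2.2.2.1
  set ld := Real.log ((S.T : ℝ) * S.d * S.N * S.m * S.P / S.delta)
  have hsq : Real.sqrt S.logInit ≤ 6 * ld :=
    (Real.sqrt_le_iff.mpr ⟨by linarith, by nlinarith⟩ : _ ≤ S.logInit).trans (by linarith)
  set a := (S.m : ℝ) ^ ((2 : ℝ) / 3) with ha
  set b := (S.P : ℝ) ^ ((2 : ℝ) / 3) with hb
  have ha0 : 0 < a := by positivity
  have hb0 : 0 < b := by positivity
  have hld0 : 0 < ld := by linarith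
  have hcube : ∀ z : ℝ, 1 ≤ z → z ≤ (z ^ ((2 : ℝ) / 3)) ^ 3 := by
    intro z hz
    have : (z ^ ((2 : ℝ) / 3)) ^ 3 = z ^ 2 := by
      rw [← Real.rpow_natCast, ← Real.rpow_mul (by linarith), ← Real.rpow_natCast]; norm_num
    rw [this]; nlinarith
  have hs : S.sigma0 ≤ C⁻¹ * (1 / (a * b * S.sigman * Real.sqrt S.d)) / ld := by
    refine hinit.trans ?_
    have : 0 < C := by linarith
    gcongr
    exact (min_le_left _ _).trans (min_le_left _ _)
  have hsd : 0 < Real.sqrt S.d := Real.sqrt_pos.mpr hd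
  have hunit : a * b * (5 / 2 * (S.sigma0 * S.sigman * Real.sqrt S.d * Real.sqrt S.logInit))
      ≤ 1 := by
    calc _ ≤ a * b * (5 / 2 * (C⁻¹ * (1 / (a * b * S.sigman * Real.sqrt S.d)) / ld *
          S.sigman * Real.sqrt S.d * (6 * ld))) := by gcongr
      _ = 15 * C⁻¹ := by field_simp; norm_num
      _ ≤ 1 := by
        rw [← div_eq_mul_inv, div_le_one (by linarith)]; exact hC
  set X := 5 / 2 * (S.sigma0 * S.sigman * Real.sqrt S.d * Real.sqrt S.logInit)
  have hX : 0 ≤ X := by positivity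
  calc (S.m : ℝ) * S.P * X ^ 3 ≤ a ^ 3 * b ^ 3 * X ^ 3 := by
        gcongr
        · exact hcube _ hm
        · exact hcube _ hP
    _ = (a * b * X) ^ 3 := by ring
    _ ≤ 1 := pow_le_one₀ (by positivity) hunit

theorem eta_alpha_sq_le (h : S.CondH C) (hC : 0 < C) : S.eta * S.alpha ^ 2 ≤ 3 / (2 * C) := by
  have hl := two_thirds_le_logT h
  have hα := S.halpha
  have hη : S.eta ≤ C⁻¹ * min (min (1 / (S.alpha ^ 3 * S.sigma0)) (1 / (S.sigman ^ 2 * S.d)))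
      (1 / S.alpha ^ 2) / S.logT := h.2.2.2.2.2.1
  have : S.eta ≤ C⁻¹ * (1 / S.alpha ^ 2) / (2 / 3) := by
    refine hη.trans ?_
    gcongr
    exact min_le_right _ _
  calc _ ≤ C⁻¹ * (1 / S.alpha ^ 2) / (2 / 3) * S.alpha ^ 2 := by gcongr
    _ = _ := by field_simp

end consequences

section earlyPhase

/-- The noise coefficient bound of the early phase, with `K` in the role of `exp (2 C₀³)`. -/
def rhoBound (K : ℝ) : ℝ :=
  100 * K * S.logInit * (S.sigma0 * S.sigman ^ 2 * S.d) /
    ((S.N : ℝ) * (S.alpha - S.eps) ^ 3 * (1 - S.pun))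

/-- The early-phase horizon, with `K` in the role of `exp (2 C₀³)`. -/
def horizon (K : ℝ) : ℝ :=
  5 * K / (S.eta * (S.alpha - S.eps) ^ 3 * (1 - S.pun) * S.sigma0)

variable {S} {C K : ℝ}

theorem rhoBound_nonneg (hK : 0 ≤ K) (hp : S.pun ≤ 1 / 2) : 0 ≤ S.rhoBound K := by
  have := S.N_pos
  have := S.hsigma0
  have := one_le_logInit (S := S)
  have : 0 < S.alpha - S.eps := sub_pos.mpr S.hepsalpha
  have : 0 < 1 - S.pun := by linarith
  unfold rhoBound
  positivity

/-- As long as the noise coefficients obey the early-phase bound, the noise alignments of the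
weights stay at their initial scale. -/
theorem noise_alignment_le (hD : S.ATDyn) (hE : S.EventE) (h : S.CondH C) (hK : 1 ≤ K)
    (hC : 64000 * K ≤ C) (hp : S.pun ≤ 1 / 2) {t : ℕ} {r : Fin S.m}
    (hR : ∀ k q, q ≠ S.sig k → S.rho k q r t ≤ S.rhoBound K)
    {i : Fin S.N} {j : Fin S.P} (hj : j ≠ S.sig i) :
    |dot (S.w t r) (S.x i j)| ≤
      5 / 2 * (S.sigma0 * S.sigman * Real.sqrt S.d * Real.sqrt S.logInit) := by
  have hR0 : 0 ≤ S.rhoBound K := rhoBound_nonneg (by linarith) hp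
  have h1 := abs_dot_w_noise_le hD hE hR0 hR hj
  have h2 := cross_noise_le h (by linarith)
  have h3 := signal_dominates h hK hC hp
  have hL1 := one_le_logInit (S := S)
  have hd : (0 : ℝ) ≤ S.d := Nat.cast_nonneg _
  have hsd := Real.sq_sqrt hd
  have hsL := Real.sq_sqrt (by linarith : 0 ≤ S.logInit)
  have hσ := S.hsigman
  have hσ0 := S.hsigma0
  have hden : 0 < (S.N : ℝ) * (S.alpha - S.eps) ^ 3 * (1 - S.pun) :=
    mul_pos (mul_pos S.N_pos (pow_pos (sub_pos.mpr S.hepsalpha) 3)) (by linarith)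
  rw [← logInit, Real.sqrt_mul hd] at h1
  set s := Real.sqrt S.d
  set l := Real.sqrt S.logInit
  have h4 : S.rhoBound K * (2 * S.sigman ^ 2 * S.d) ≤ 1 / 2 * (S.sigma0 * S.sigman * s * l) := by
    rw [rhoBound, div_mul_eq_mul_div, div_le_iff₀ hden, ← hsL, ← hsd]
    calc _ = 1 / 2 * (S.sigma0 * S.sigman * s * l) * (400 * K * l * (S.sigman * s) ^ 3) := by ring
      _ ≤ _ := by gcongr
  have h5 := mul_le_mul_of_nonneg_left h2 hR0
  linarith

/-- The early-phase bound on the noise coefficients up to the horizon. -/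
theorem rho_le_rhoBound (hD : S.ATDyn) (hE : S.EventE) (h : S.CondH C) (hK : 1 ≤ K)
    (hC : 64000 * K ≤ C) (hp : S.pun ≤ 1 / 2) {t : ℕ} (ht : (t : ℝ) ≤ S.horizon K)
    (i : Fin S.N) (j : Fin S.P) (r : Fin S.m) (hj : j ≠ S.sig i) :
    S.rho i j r t ≤ S.rhoBound K := by
  have hN := S.N_pos
  have hη := S.heta
  have hσ0 := S.hsigma0
  have hL1 := one_le_logInit (S := S)
  have hd : (0 : ℝ) ≤ S.d := Nat.cast_nonneg _
  have hαε : 0 < S.alpha - S.eps := sub_pos.mpr S.hepsalpha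
  have hp1 : 0 < 1 - S.pun := by linarith
  set B := 5 / 2 * (S.sigma0 * S.sigman * Real.sqrt S.d * Real.sqrt S.logInit) with hB
  have htime : ∀ t : ℕ, (t : ℝ) ≤ S.horizon K →
      t * (3 * S.eta / S.N * B ^ 2) ≤ S.rhoBound K := by
    intro t ht
    have hB2 : B ^ 2 = 25 / 4 * (S.sigma0 ^ 2 * S.sigman ^ 2 * S.d * S.logInit) := by
      rw [hB, mul_pow, mul_pow, mul_pow, mul_pow, Real.sq_sqrt hd, Real.sq_sqrt (by linarith)]
      norm_num
    calc _ ≤ S.horizon K * (3 * S.eta / S.N * B ^ 2) := by gcongr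
      _ = 15 / 16 * S.rhoBound K := by
        rw [hB2, horizon, rhoBound]; field_simp; ring
      _ ≤ _ := by linarith [rhoBound_nonneg (S := S) (by linarith : 0 ≤ K) hp]
  have key : ∀ t : ℕ, (t : ℝ) ≤ S.horizon K → ∀ i j r, j ≠ S.sig i →
      S.rho i j r t ≤ t * (3 * S.eta / S.N * B ^ 2) := by
    intro t
    induction t with
    | zero => intro _ i j r _; simp [rho]
    | succ t ih =>
      intro ht i j r hj
      push_cast at ht
      have ih' := ih (by linarith)
      have hdot := noise_alignment_le hD hE h hK hC hp
        (fun k q hq => (ih' k q r hq).trans (htime t (by linarith))) hj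
      have hsq : dot (S.w t r) (S.x i j) ^ 2 ≤ B ^ 2 := by
        rw [← sq_abs]; exact pow_le_pow_left₀ (abs_nonneg _) hdot 2
      have hinc : (3 * S.eta / S.N) * psi (S.marg t i) * dot (S.w t r) (S.x i j) ^ 2 ≤
          (3 * S.eta / S.N) * 1 * B ^ 2 := by
        have := psi_le_one (S.marg t i)
        gcongr
      have := ih' i j r hj
      simp only [rho]
      push_cast
      linarith
  exact (key t ht i j r hj).trans (htime t ht)

/-- The signal-learning hitting time is at most the early-phase horizon. -/
theorem T0_le_horizon {C0 : ℝ} (hC0 : 1 ≤ C0) (hD : S.ATDyn) (hE : S.EventE) (h : S.CondH C)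
    (hC : 64000 * Real.exp (2 * C0 ^ 3) ≤ C) (hp : S.pun ≤ 1 / 2) :
    (S.T0 C0 : ℝ) ≤ S.horizon (Real.exp (2 * C0 ^ 3)) := by
  by_contra! hlt
  have hC03 : 1 ≤ C0 ^ 3 := one_le_pow₀ hC0
  have hK : 1 ≤ Real.exp (2 * C0 ^ 3) := Real.one_le_exp (by linarith)
  have hC0K : C0 ≤ Real.exp (2 * C0 ^ 3) := by
    have := Real.add_one_le_exp (2 * C0 ^ 3)
    have : C0 ≤ C0 ^ 3 := le_self_pow₀ hC0 (by norm_num)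
    linarith
  set K := Real.exp (2 * C0 ^ 3) with hKdef
  have hN := S.N_pos
  have hη := S.heta
  have hσ0 := S.hsigma0
  have hα := S.halpha
  have hm : (1 : ℝ) ≤ S.m := by exact_mod_cast S.hm
  have hαε : 0 < S.alpha - S.eps := sub_pos.mpr S.hepsalpha
  have hp1 : 0 < 1 - S.pun := by linarith
  have hp0 : 0 ≤ S.pun := by unfold pun; positivity
  obtain ⟨r, hr⟩ := hE.2.2.2.2.2.2.1
  rw [dot_e1] at hr
  change S.sigma0 / 2 ≤ S.wsig 0 r at hr
  set A := C0 / (S.alpha * (S.m : ℝ) ^ ((1 : ℝ) / 3)) with hA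
  set κ := 3 / 2 * (S.eta * (S.alpha - S.eps) ^ 3 * (1 - S.pun)) / K with hκ
  have hm3 : 1 ≤ (S.m : ℝ) ^ ((1 : ℝ) / 3) := Real.one_le_rpow hm (by norm_num)
  have hκA : κ * A ≤ 1 := by
    have hηα := eta_alpha_sq_le h (by linarith : 0 < C)
    have hε := S.heps
    calc κ * A ≤ 3 / 2 * (S.eta * S.alpha ^ 3 * 1) / K * (K / (S.alpha * 1)) := by
          rw [hκ, hA]; gcongr <;> linarith
      _ = 3 / 2 * (S.eta * S.alpha ^ 2) := by field_simp
      _ ≤ 3 / 2 * (3 / (2 * C)) := by gcongr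
      _ ≤ 1 := by
        rw [← mul_div_assoc, div_le_one (by linarith)]; linarith
  have hbelow : ∀ t < S.T0 C0, ∀ r, S.wsig t r ≤ A := by
    intro t ht r
    have := Nat.notMem_of_lt_sInf ht
    simp only [Set.mem_ofPred_eq, not_exists, not_lt] at this
    exact this r
  have hstep : ∀ t < S.T0 C0, (t : ℝ) ≤ S.horizon K →
      S.wsig t r + κ * S.wsig t r ^ 2 ≤ S.wsig (t + 1) r := by
    intro t ht hth
    have hmarg : ∀ i ∈ S.SL, S.marg t i ≤ 2 * C0 ^ 3 := by
      intro i hi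
      have hB0 : 0 ≤ 5 / 2 * (S.sigma0 * S.sigman * Real.sqrt S.d * Real.sqrt S.logInit) := by
        have := S.hsigman
        positivity
      have hle := marg_le hi (a := S.alpha * A) hB0 (by positivity)
        (fun r => mul_le_mul_of_nonneg_left (hbelow t ht r) hα.le)
        (fun r j hj => noise_alignment_le hD hE h hK hC hp
          (fun k q hq => rho_le_rhoBound hD hE h hK hC hp hth k q r hq) hj)
      have hnoise := noise_output_le h (by linarith)
      have hsignal : (S.m : ℝ) * (S.alpha * A) ^ 3 = C0 ^ 3 := by
        have hcube : ((S.m : ℝ) ^ ((1 : ℝ) / 3)) ^ 3 = S.m := by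
          rw [← Real.rpow_natCast, ← Real.rpow_mul (by linarith)]; norm_num
        have : S.alpha * A = C0 / (S.m : ℝ) ^ ((1 : ℝ) / 3) := by rw [hA]; field_simp
        rw [this, div_pow, hcube]
        field_simp
      linarith
    rw [wsig_succ hD t r]
    have hsum : ∑ _i ∈ S.SL, 1 / (2 * K) * (S.alpha - S.eps) ^ 3 * S.wsig t r ^ 2 ≤
        ∑ i ∈ S.SL, psi (S.marg t i) *
          (S.y i * dot (S.xadv t i (S.sig i)) (e1 S.d S.hd)) ^ 3 * S.wsig t r ^ 2 := by
      refine Finset.sum_le_sum fun i hi => ?_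
      have h1 := inv_two_exp_le_psi (by positivity) (hmarg i hi)
      have h2 := (S.hadvlearn t i hi).1
      have := psi_pos (S.marg t i)
      gcongr
    rw [Finset.sum_const, nsmul_eq_mul] at hsum
    have hκeq : κ * S.wsig t r ^ 2 = (3 * S.eta / S.N) *
        (S.SL.card * (1 / (2 * K) * (S.alpha - S.eps) ^ 3 * S.wsig t r ^ 2)) := by
      rw [hκ, ← S.card_SL_div]; field_simp
    rw [hκeq]
    gcongr
  have hH0 : 0 ≤ S.horizon K := by unfold horizon; positivity
  set n := ⌊S.horizon K⌋₊ + 1 with hn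
  have hnT : n ≤ S.T0 C0 := (Nat.floor_lt hH0).mpr hlt
  have hnH : ∀ t < n, (t : ℝ) ≤ S.horizon K := fun t ht =>
    (Nat.le_floor_iff hH0).mp (by omega)
  have hgrow := quadratic_growth_time (w := fun t => S.wsig t r) (n := n) (by positivity) hκA
    (by linarith) (fun t ht => hbelow t (by omega) r)
    (fun t ht => hstep t (by omega) (hnH t ht))
  have hinv : 1 / S.wsig 0 r ≤ 1 / (S.sigma0 / 2) := one_div_le_one_div_of_le (by positivity) hr
  have hlt' : S.horizon K < n := by rw [hn]; push_cast; exact Nat.lt_floor_add_one _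
  have hκpos : 0 < κ := by positivity
  have h1 : S.horizon K * (κ / 2) < n * (κ / 2) := by gcongr
  have h2 : S.horizon K * (κ / 2) = 15 / 4 * (1 / S.sigma0) := by
    rw [horizon, hκ]; field_simp; norm_num
  have h3 : 1 / (S.sigma0 / 2) = 2 * (1 / S.sigma0) := by field_simp
  have h4 : 0 < 1 / S.sigma0 := by positivity
  linarith

end earlyPhase

end Setting

/-- Early-phase noise coefficient bound for every `C₀ ≥ 1` and every sufficiently large `C`. -/
theorem early_phase_rho_le {C0 C : ℝ} (hC0 : 1 ≤ C0) (hC : 64000 * Real.exp (2 * C0 ^ 3) ≤ C)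
    {S : Setting} (hD : S.ATDyn) (hE : S.EventE) (h : S.CondH C)
    (hs : S.SU.Nonempty → S.SparseRegime C) {t : ℕ}
    (ht : (t : ℝ) ≤ S.horizon (Real.exp (2 * C0 ^ 3)) ∨ t ≤ S.T0 C0)
    (i : Fin S.N) (j : Fin S.P) (r : Fin S.m) (hj : j ≠ S.sig i) :
    S.rho i j r t ≤ S.rhoBound (Real.exp (2 * C0 ^ 3)) := by
  have hK : 1 ≤ Real.exp (2 * C0 ^ 3) := Real.one_le_exp (by positivity)
  have hp := Setting.pun_le h (by linarith) hs
  refine Setting.rho_le_rhoBound hD hE h hK hC hp (ht.elim id fun ht => ?_) i j r hj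
  exact (Nat.cast_le.mpr ht).trans (Setting.T0_le_horizon hC0 hD hE h hC hp)

/-- Early-phase noise coefficient bound. On the event `E`, under
Condition (H), for all iterations `t ≤ T̂₀ = 5 exp(2C₀³)/(η(α−ε)³(1−p_un)σ₀)` the noise
coefficients are bounded as stated; in particular the same bound holds for `t ≤ T₀`. -/
theorem stmt5 :
    ∃ C0 C : ℝ, 0 < C0 ∧ 0 < C ∧
      ∀ S : Setting, S.ATDyn → S.EventE → S.CondH C → (S.SU.Nonempty → S.SparseRegime C) →
        (∀ t : ℕ, (t : ℝ) ≤ 5 * Real.exp (2 * C0 ^ 3) /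
              (S.eta * (S.alpha - S.eps) ^ 3 * (1 - S.pun) * S.sigma0) →
          ∀ i j r, j ≠ S.sig i →
            S.rho i j r t ≤
              100 * Real.exp (2 * C0 ^ 3) * Real.log ((16 : ℝ) * S.N * S.m * S.P / S.delta) *
                (S.sigma0 * S.sigman ^ 2 * S.d) /
                ((S.N : ℝ) * (S.alpha - S.eps) ^ 3 * (1 - S.pun))) ∧
        (∀ t : ℕ, t ≤ S.T0 C0 →
          ∀ i j r, j ≠ S.sig i →
            S.rho i j r t ≤
              100 * Real.exp (2 * C0 ^ 3) * Real.log ((16 : ℝ) * S.N * S.m * S.P / S.delta) *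
                (S.sigma0 * S.sigman ^ 2 * S.d) /
                ((S.N : ℝ) * (S.alpha - S.eps) ^ 3 * (1 - S.pun))) := by
  refine ⟨1, 64000 * Real.exp (2 * 1 ^ 3), one_pos, by positivity, fun S hD hE h hs => ⟨?_, ?_⟩⟩
  · exact fun t ht => early_phase_rho_le le_rfl le_rfl hD hE h hs (Or.inl ht)
  · exact fun t ht => early_phase_rho_le le_rfl le_rfl hD hE h hs (Or.inr ht)

end AD

end
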